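/- Let A = (1, a_y, a_z) and B = (b_x, 1, b_z) be points of X. Then the geodesic distance d(A,B) equals the minimum of the three quantities α = max{2 − a_y − b_x, |a_z − b_z|}, β = max{2 − a_z − b_x, 2 − a_y − b_z}, and γ = max{2 + a_z − b_x, 2 − a_y + b_z}. -/

import Mathlib

open Set
open scoped ENNReal

/-- The geodesic distance between two points on the unit sphere (for the sup norm)
of `Fin n → ℝ`: the infimum over continuous paths `γ : [0,1] → {x : ‖x‖ = 1}` joining
them of the length of `γ`, i.e. its total variation. -/
noncomputable def geoDist {n : ℕ} (A B : Fin n → ℝ) : ℝ≥0∞ :=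
  ⨅ (γ : ℝ → (Fin n → ℝ)) (_ : ContinuousOn γ (Icc 0 1)) (_ : γ 0 = A)
    (_ : γ 1 = B) (_ : ∀ t ∈ Icc (0:ℝ) 1, ‖γ t‖ = 1),
    eVariationOn γ (Icc 0 1)

/-!
*Lower bound.* Let `C` be the union of the faces `x = 1` and `y = -1`, and `D` the union of the
faces `y = 1` and `x = -1`. Every point of `C` is at distance at least `1 - b_x` from `B`, every
point of `D` at distance at least `1 - a_y` from `A`. Since `C`, `D` and the two disjoint faces
`z = ±1` cover the sphere, connectedness of a path from `A ∈ C` to `B ∈ D` shows that it either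
meets `C ∩ D`, which costs at least `2 - a_y - b_x` and, trivially, `|a_z - b_z|`, or meets both `C`
and `D` in one and the same face `z = ε`. In the latter case the two meeting points bound the
length from below by `2 - ε a_z - b_x` and by `2 - a_y - ε b_z`.

*Upper bound.* Two segments meeting at a point of the edge `x = y = 1` realize `α`. Three segments
crossing the face `z = ε` have total length at most `max (2 - ε a_z - ε b_z) β`, where `β` stands
for `γ` if `ε = -1`; when the first entry exceeds `β`, the path across the edge is already no
longer than `β`.
-/

open Metric

section Paths

variable {E : Type*}

/-- The concatenation of two paths parametrized by `[0, 1]`, each run at double speed; at the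
midpoint the value is `γ 1`. -/
noncomputable def concatPath (γ δ : ℝ → E) (t : ℝ) : E :=
  if t ≤ 1 / 2 then γ (2 * t) else δ (2 * t - 1)

lemma concatPath_eqOn_left (γ δ : ℝ → E) :
    EqOn (concatPath γ δ) (γ ∘ fun t ↦ 2 * t) (Icc 0 (1 / 2)) :=
  fun _ ht ↦ if_pos ht.2

lemma concatPath_eqOn_right {γ δ : ℝ → E} (h : γ 1 = δ 0) :
    EqOn (concatPath γ δ) (δ ∘ fun t ↦ 2 * t - 1) (Icc (1 / 2) 1) := by
  intro t ht
  rcases ht.1.eq_or_lt with rfl | hlt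
  · norm_num [concatPath, h]
  · exact if_neg hlt.not_ge

lemma mapsTo_two_mul : MapsTo (fun t : ℝ ↦ 2 * t) (Icc 0 (1 / 2)) (Icc 0 1) :=
  fun _ ht ↦ ⟨by linarith [ht.1], by linarith [ht.2]⟩

lemma mapsTo_two_mul_sub_one : MapsTo (fun t : ℝ ↦ 2 * t - 1) (Icc (1 / 2) 1) (Icc 0 1) :=
  fun _ ht ↦ ⟨by linarith [ht.1], by linarith [ht.2]⟩

lemma Icc_zero_half_union_Icc_half_one : Icc (0 : ℝ) (1 / 2) ∪ Icc (1 / 2) 1 = Icc 0 1 :=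
  Icc_union_Icc_eq_Icc (by norm_num) (by norm_num)

lemma mapsTo_concatPath {γ δ : ℝ → E} {s : Set E} (h : γ 1 = δ 0) (hγ : MapsTo γ (Icc 0 1) s)
    (hδ : MapsTo δ (Icc 0 1) s) : MapsTo (concatPath γ δ) (Icc 0 1) s := by
  rw [← Icc_zero_half_union_Icc_half_one]
  exact ((hγ.comp mapsTo_two_mul).congr (concatPath_eqOn_left γ δ).symm).union
    ((hδ.comp mapsTo_two_mul_sub_one).congr (concatPath_eqOn_right h).symm)

lemma continuousOn_concatPath [TopologicalSpace E] {γ δ : ℝ → E} (h : γ 1 = δ 0)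
    (hγ : ContinuousOn γ (Icc 0 1)) (hδ : ContinuousOn δ (Icc 0 1)) :
    ContinuousOn (concatPath γ δ) (Icc 0 1) := by
  rw [← Icc_zero_half_union_Icc_half_one]
  exact ((hγ.comp (by fun_prop) mapsTo_two_mul).congr
      (concatPath_eqOn_left γ δ)).union_of_isClosed
    ((hδ.comp (by fun_prop) mapsTo_two_mul_sub_one).congr (concatPath_eqOn_right h))
    isClosed_Icc isClosed_Icc

lemma eVariationOn_Icc_add_Icc [PseudoEMetricSpace E] (γ : ℝ → E) {a b c : ℝ} (hab : a ≤ b)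
    (hbc : b ≤ c) :
    eVariationOn γ (Icc a b) + eVariationOn γ (Icc b c) = eVariationOn γ (Icc a c) := by
  simpa only [univ_inter] using eVariationOn.Icc_add_Icc γ hab hbc (mem_univ b)

lemma eVariationOn_concatPath_le [PseudoEMetricSpace E] {γ δ : ℝ → E} (h : γ 1 = δ 0) :
    eVariationOn (concatPath γ δ) (Icc 0 1) ≤
      eVariationOn γ (Icc 0 1) + eVariationOn δ (Icc 0 1) := by
  rw [← eVariationOn_Icc_add_Icc _ (by norm_num : (0 : ℝ) ≤ 1 / 2) (by norm_num),
    eVariationOn.congr (concatPath_eqOn_left γ δ), eVariationOn.congr (concatPath_eqOn_right h)]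
  refine add_le_add (eVariationOn.comp_le_of_monotoneOn _ _ ?_ mapsTo_two_mul)
    (eVariationOn.comp_le_of_monotoneOn _ _ ?_ mapsTo_two_mul_sub_one)
  · exact fun s _ t _ hst ↦ by linarith
  · exact fun s _ t _ hst ↦ by linarith

lemma edist_add_edist_le_eVariationOn [PseudoEMetricSpace E] (γ : ℝ → E) {a b c : ℝ}
    (hab : a ≤ b) (hbc : b ≤ c) :
    edist (γ a) (γ b) + edist (γ b) (γ c) ≤ eVariationOn γ (Icc a c) := by
  rw [← eVariationOn_Icc_add_Icc γ hab hbc]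
  exact add_le_add
    (eVariationOn.edist_le γ (left_mem_Icc.2 hab) (right_mem_Icc.2 hab))
    (eVariationOn.edist_le γ (left_mem_Icc.2 hbc) (right_mem_Icc.2 hbc))

lemma eVariationOn_lineMap_le [SeminormedAddCommGroup E] [NormedSpace ℝ E] (A B : E) :
    eVariationOn (AffineMap.lineMap A B : ℝ → E) (Icc 0 1) ≤ edist A B := by
  calc eVariationOn (AffineMap.lineMap A B : ℝ → E) (Icc 0 1)
      ≤ nndist A B * eVariationOn (id : ℝ → ℝ) (Icc 0 1) :=
        (lipschitzWith_lineMap A B).lipschitzOnWith.comp_eVariationOn_le (mapsTo_univ _ _)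
    _ = edist A B := by simp

end Paths

/-- A continuous path from `A` to `B` on the unit sphere of the sup norm, parametrized by `[0, 1]`;
these are the paths over which `geoDist A B` takes its infimum. -/
structure IsSpherePath {n : ℕ} (A B : Fin n → ℝ) (γ : ℝ → Fin n → ℝ) : Prop where
  continuousOn : ContinuousOn γ (Icc 0 1)
  source : γ 0 = A
  target : γ 1 = B
  mapsTo : MapsTo γ (Icc 0 1) (sphere 0 1)

section GeoDist

variable {n : ℕ} {A B C : Fin n → ℝ} {γ δ : ℝ → Fin n → ℝ}

lemma geoDist_eq_iInf (A B : Fin n → ℝ) :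
    geoDist A B = ⨅ (γ) (_ : IsSpherePath A B γ), eVariationOn γ (Icc 0 1) := by
  refine le_antisymm (le_iInf₂ fun γ hγ ↦ ?_) ?_
  · exact iInf_le_of_le γ <| iInf_le_of_le hγ.continuousOn <| iInf_le_of_le hγ.source <|
      iInf_le_of_le hγ.target <| iInf_le _ fun t ht ↦ mem_sphere_zero_iff_norm.1 (hγ.mapsTo ht)
  · exact le_iInf fun γ ↦ le_iInf fun hc ↦ le_iInf fun h₀ ↦ le_iInf fun h₁ ↦ le_iInf fun hs ↦
      iInf₂_le γ ⟨hc, h₀, h₁, fun t ht ↦ mem_sphere_zero_iff_norm.2 (hs t ht)⟩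

lemma IsSpherePath.geoDist_le (h : IsSpherePath A B γ) :
    geoDist A B ≤ eVariationOn γ (Icc 0 1) :=
  (geoDist_eq_iInf A B).trans_le (iInf₂_le γ h)

lemma IsSpherePath.concat (hγ : IsSpherePath A B γ) (hδ : IsSpherePath B C δ) :
    IsSpherePath A C (concatPath γ δ) where
  continuousOn :=
    continuousOn_concatPath (hγ.target.trans hδ.source.symm) hγ.continuousOn hδ.continuousOn
  source := by simp [concatPath, hγ.source]
  target := by norm_num [concatPath, hδ.target]
  mapsTo := mapsTo_concatPath (hγ.target.trans hδ.source.symm) hγ.mapsTo hδ.mapsTo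

lemma geoDist_triangle (A B C : Fin n → ℝ) : geoDist A C ≤ geoDist A B + geoDist B C := by
  rw [geoDist_eq_iInf A B, geoDist_eq_iInf B C]
  simp only [ENNReal.iInf_add, ENNReal.add_iInf]
  exact le_iInf₂ fun δ hδ ↦ le_iInf₂ fun γ hγ ↦ (hγ.concat hδ).geoDist_le.trans
    (eVariationOn_concatPath_le (hγ.target.trans hδ.source.symm))

lemma geoDist_le_edist_of_segment_subset (h : segment ℝ A B ⊆ sphere 0 1) :
    geoDist A B ≤ edist A B := by
  refine (IsSpherePath.geoDist_le ⟨?_, ?_, ?_, fun t ht ↦ ?_⟩).trans (eVariationOn_lineMap_le A B)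
  · exact AffineMap.lineMap_continuous.continuousOn
  · exact AffineMap.lineMap_apply_zero A B
  · exact AffineMap.lineMap_apply_one A B
  · exact h (lineMap_mem_segment ℝ A B ht)

lemma IsSpherePath.isPreconnected_image (h : IsSpherePath A B γ) :
    IsPreconnected (γ '' Icc 0 1) :=
  isPreconnected_Icc.image γ h.continuousOn

lemma IsSpherePath.source_mem_image (h : IsSpherePath A B γ) : A ∈ γ '' Icc 0 1 :=
  ⟨0, left_mem_Icc.2 zero_le_one, h.source⟩

lemma IsSpherePath.target_mem_image (h : IsSpherePath A B γ) : B ∈ γ '' Icc 0 1 :=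
  ⟨1, right_mem_Icc.2 zero_le_one, h.target⟩

lemma IsSpherePath.ofReal_le_eVariationOn (h : IsSpherePath A B γ) {P : Fin n → ℝ}
    (hP : P ∈ γ '' Icc 0 1) {r : ℝ} (hr : r ≤ dist A P + dist P B) :
    ENNReal.ofReal r ≤ eVariationOn γ (Icc 0 1) := by
  obtain ⟨t, ht, rfl⟩ := hP
  calc ENNReal.ofReal r ≤ ENNReal.ofReal (dist A (γ t) + dist (γ t) B) :=
        ENNReal.ofReal_le_ofReal hr
    _ = edist (γ 0) (γ t) + edist (γ t) (γ 1) := by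
        rw [ENNReal.ofReal_add dist_nonneg dist_nonneg, ← edist_dist, ← edist_dist, h.source,
          h.target]
    _ ≤ eVariationOn γ (Icc 0 1) := edist_add_edist_le_eVariationOn γ ht.1 ht.2

end GeoDist

section Face

variable {n : ℕ} {A B P : Fin n → ℝ} {i j : Fin n} {ε : ℝ}

/-- The slice `xᵢ = ε` of the cube `[-1, 1]ⁿ`; for `ε = ±1` it is a facet of the cube. -/
def face (i : Fin n) (ε : ℝ) : Set (Fin n → ℝ) :=
  closedBall 0 1 ∩ {P | P i = ε}

lemma mem_face_iff : P ∈ face i ε ↔ (∀ j, |P j| ≤ 1) ∧ P i = ε := by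
  simp [face, pi_norm_le_iff_of_nonneg]

lemma isClosed_face (i : Fin n) (ε : ℝ) : IsClosed (face i ε) :=
  isClosed_closedBall.inter (isClosed_eq (continuous_apply i) continuous_const)

lemma convex_face (i : Fin n) (ε : ℝ) : Convex ℝ (face i ε) :=
  (convex_closedBall 0 1).inter
    (convex_hyperplane (LinearMap.proj (R := ℝ) (φ := fun _ ↦ ℝ) i).isLinear ε)

lemma face_subset_sphere (hε : |ε| = 1) : face i ε ⊆ sphere 0 1 := by
  rintro P ⟨hP, rfl⟩
  rw [mem_closedBall_zero_iff] at hP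
  exact mem_sphere_zero_iff_norm.2 (hP.antisymm (hε ▸ norm_le_pi_norm P i))

lemma exists_mem_face_of_mem_sphere (hP : P ∈ sphere 0 1) : ∃ i, P ∈ face i 1 ∪ face i (-1) := by
  have hball := sphere_subset_closedBall hP
  rw [mem_sphere_zero_iff_norm] at hP
  have : Nonempty (Fin n) := by
    by_contra! h
    simp [Subsingleton.elim P 0] at hP
  obtain ⟨i, hi⟩ := (IsGreatest.pi_norm P).1
  exact ⟨i, (eq_or_eq_neg_of_abs_eq (hi.trans hP)).imp (⟨hball, ·⟩) (⟨hball, ·⟩)⟩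

lemma pairwiseDisjoint_face (i : Fin n) (s : Set ℝ) : s.PairwiseDisjoint (face i) :=
  fun _ _ _ _ hne ↦ disjoint_left.2 fun _ h h' ↦ hne (h.2.symm.trans h'.2)

lemma geoDist_le_edist_of_mem_face (hε : |ε| = 1) (hA : A ∈ face i ε) (hB : B ∈ face i ε) :
    geoDist A B ≤ edist A B :=
  geoDist_le_edist_of_segment_subset
    (((convex_face i ε).segment_subset hA hB).trans (face_subset_sphere hε))

lemma one_sub_mul_le_dist (A : Fin n → ℝ) (hε : |ε| = 1) (hP : P i = ε) :
    1 - ε * A i ≤ dist A P :=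
  calc 1 - ε * A i = ε * (ε - A i) := by rw [mul_sub, ← abs_mul_abs_self ε, hε, one_mul]
    _ ≤ |ε| * |ε - A i| := (le_abs_self _).trans_eq (abs_mul _ _)
    _ = dist (A i) (P i) := by rw [hε, one_mul, hP, abs_sub_comm, Real.dist_eq]
    _ ≤ dist A P := dist_le_pi_dist A P i

lemma one_sub_le_dist_of_mem_face (hA : A ∈ face i 1) (hP : P ∈ face j 1 ∪ face i (-1)) :
    1 - A j ≤ dist A P := by
  rcases hP with ⟨-, hP⟩ | ⟨-, hP⟩
  · simpa using one_sub_mul_le_dist A abs_one hP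
  · have htwo : 2 ≤ dist A P := by
      have := one_sub_mul_le_dist A (by norm_num) hP
      rw [hA.2] at this
      linarith
    linarith [(abs_le.1 ((mem_face_iff.1 hA).1 j)).1]

lemma abs_sub_eq_one_sub_mul {a : ℝ} (hε : |ε| = 1) (ha : |a| ≤ 1) : |a - ε| = 1 - ε * a := by
  obtain ⟨ha₀, ha₁⟩ := abs_le.1 ha
  rcases eq_or_eq_neg_of_abs_eq hε with rfl | rfl
  · rw [abs_of_nonpos (by linarith)]; ring
  · rw [abs_of_nonneg (by linarith)]; ring

lemma exists_mem_face_inter_face_dist_le {k : Fin n} (hε : |ε| = 1) (hA : A ∈ face i 1)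
    (hij : i ≠ j) (hik : i ≠ k) (hjk : j ≠ k) :
    ∃ P ∈ face i 1 ∩ face k ε, dist A P ≤ 1 - ε * A k ∧ 1 - P j ≤ max 0 (ε * A k - A j) := by
  obtain ⟨hA1, hAi⟩ := mem_face_iff.1 hA
  obtain ⟨hj, hj'⟩ := abs_le.1 (hA1 j)
  have hAk := abs_sub_eq_one_sub_mul hε (hA1 k)
  have hk : 0 ≤ 1 - ε * A k := hAk ▸ abs_nonneg _
  set p := min 1 (A j + (1 - ε * A k)) with hp
  have hp1 : p ≤ 1 := min_le_left _ _
  have hp2 : p ≤ A j + (1 - ε * A k) := min_le_right _ _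
  have hjp : A j ≤ p := le_min hj' (by linarith)
  -- While `x_k` moves to `ε`, raise `x_j` by the same amount, but not beyond `1`.
  set P := Function.update (Function.update A j p) k ε with hP
  have hPi : P i = 1 := by simp [hP, hij, hik, hAi]
  have hPj : P j = p := by simp [hP, hjk]
  have hPk : P k = ε := by simp [hP]
  have hP_of_ne {l : Fin n} (hlj : l ≠ j) (hlk : l ≠ k) : P l = A l := by simp [hP, hlj, hlk]
  have hP1 (l : Fin n) : |P l| ≤ 1 := by
    rcases eq_or_ne l k with rfl | hlk
    · exact hPk ▸ hε.le
    rcases eq_or_ne l j with rfl | hlj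
    · exact hPj ▸ abs_le.2 ⟨hj.trans hjp, hp1⟩
    · exact hP_of_ne hlj hlk ▸ hA1 l
  refine ⟨P, ⟨mem_face_iff.2 ⟨hP1, hPi⟩, mem_face_iff.2 ⟨hP1, hPk⟩⟩, ?_, ?_⟩
  · refine (dist_pi_le_iff hk).2 fun l ↦ ?_
    rw [Real.dist_eq]
    rcases eq_or_ne l k with rfl | hlk
    · exact hPk ▸ hAk.le
    rcases eq_or_ne l j with rfl | hlj
    · exact hPj ▸ abs_le.2 ⟨by linarith, by linarith⟩
    · simpa [hP_of_ne hlj hlk] using hk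
  · rcases min_choice 1 (A j + (1 - ε * A k)) with h | h
    · exact le_max_of_le_left (by linarith)
    · exact le_max_of_le_right (by linarith)

end Face

lemma inter_nonempty_or_exists_of_isPreconnected {X ι : Type*} [TopologicalSpace X]
    {S C D : Set X} {I : Set ι} {Z : ι → Set X} (hS : IsPreconnected S) (hC : IsClosed C)
    (hD : IsClosed D) (hI : I.Finite) (hZ : ∀ i ∈ I, IsClosed (Z i)) (hdisj : I.PairwiseDisjoint Z)
    (hcover : S ⊆ C ∪ D ∪ ⋃ i ∈ I, Z i) (hSC : (S ∩ C).Nonempty) (hSD : (S ∩ D).Nonempty) :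
    (S ∩ (C ∩ D)).Nonempty ∨
      ∃ i ∈ I, (S ∩ (C ∩ Z i)).Nonempty ∧ (S ∩ (D ∩ Z i)).Nonempty := by
  -- Enlarge `C` by the pieces `Z i` that it meets inside `S`, and `D` by all the others.
  set J := {i ∈ I | (S ∩ (C ∩ Z i)).Nonempty}
  have hclosed (K : Set ι) (hK : K ⊆ I) : IsClosed (⋃ i ∈ K, Z i) :=
    (hI.subset hK).isClosed_biUnion fun i hi ↦ hZ i (hK hi)
  have hcover' : S ⊆ (C ∪ ⋃ i ∈ J, Z i) ∪ (D ∪ ⋃ i ∈ I \ J, Z i) := by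
    rwa [union_union_union_comm, ← biUnion_union, union_sdiff_cancel (sep_subset I _)]
  obtain ⟨P, hPS, hPC, hPD⟩ := isPreconnected_closed_iff.1 hS _ _
    (hC.union (hclosed J (sep_subset I _))) (hD.union (hclosed (I \ J) sdiff_subset)) hcover'
    (hSC.mono (inter_subset_inter_right S subset_union_left))
    (hSD.mono (inter_subset_inter_right S subset_union_left))
  simp only [mem_union, mem_iUnion₂] at hPC hPD
  rcases hPC with hPC | ⟨i, hi, hPi⟩ <;> rcases hPD with hPD | ⟨k, hk, hPk⟩
  · exact .inl ⟨P, hPS, hPC, hPD⟩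
  · exact absurd ⟨hk.1, P, hPS, hPC, hPk⟩ hk.2
  · exact .inr ⟨i, hi.1, hi.2, P, hPS, hPD, hPi⟩
  · exact absurd hi (hdisj.elim_set hi.1 hk.1 P hPi hPk ▸ hk.2)

section Cube

variable {A B : Fin 3 → ℝ} {ε : ℝ}

/-- The length `α` of a shortest path from `A` in the face `x = 1` to `B` in the face `y = 1` among
those that cross the edge between these two faces. -/
def lengthViaEdge (A B : Fin 3 → ℝ) : ℝ :=
  max (2 - A 1 - B 0) |A 2 - B 2|

/-- The sup-norm distance from `A` in the face `x = 1` to `B` in the face `y = 1` after unfolding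
both onto the plane of the face `z = ε`, where `ε = ±1`: this is `β` for `ε = 1` and `γ` for
`ε = -1`. -/
def lengthViaFace (ε : ℝ) (A B : Fin 3 → ℝ) : ℝ :=
  max (2 - ε * A 2 - B 0) (2 - A 1 - ε * B 2)

lemma sphere_subset_union_faces :
    sphere (0 : Fin 3 → ℝ) 1 ⊆
      (face 0 1 ∪ face 1 (-1)) ∪ (face 1 1 ∪ face 0 (-1)) ∪ ⋃ ε ∈ ({1, -1} : Set ℝ), face 2 ε := by
  intro P hP
  obtain ⟨i, hi⟩ := exists_mem_face_of_mem_sphere hP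
  rw [biUnion_pair]
  fin_cases i
  · exact .inl (hi.imp .inl .inr)
  · exact .inl (hi.symm.imp .inr .inl)
  · exact .inr hi

lemma IsSpherePath.lengthViaEdge_le_or_lengthViaFace_le {γ : ℝ → Fin 3 → ℝ}
    (h : IsSpherePath A B γ) (hA : A ∈ face 0 1) (hB : B ∈ face 1 1) :
    ENNReal.ofReal (lengthViaEdge A B) ≤ eVariationOn γ (Icc 0 1) ∨
      ∃ ε ∈ ({1, -1} : Set ℝ),
        ENNReal.ofReal (lengthViaFace ε A B) ≤ eVariationOn γ (Icc 0 1) := by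
  have hcases := inter_nonempty_or_exists_of_isPreconnected h.isPreconnected_image
    ((isClosed_face 0 1).union (isClosed_face 1 (-1)))
    ((isClosed_face 1 1).union (isClosed_face 0 (-1)))
    (toFinite {1, -1}) (fun ε _ ↦ isClosed_face 2 ε) (pairwiseDisjoint_face 2 {1, -1})
    (h.mapsTo.image_subset.trans sphere_subset_union_faces)
    ⟨A, h.source_mem_image, .inl hA⟩ ⟨B, h.target_mem_image, .inl hB⟩
  refine hcases.imp ?_ ?_
  · rintro ⟨P, hP, hPC, hPD⟩
    rw [lengthViaEdge, ENNReal.ofReal_max]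
    have hAP := one_sub_le_dist_of_mem_face hA hPD
    have hBP := one_sub_le_dist_of_mem_face hB hPC
    refine max_le (h.ofReal_le_eVariationOn hP ?_) (h.ofReal_le_eVariationOn hP ?_)
    · linarith [dist_comm B P]
    · exact (dist_le_pi_dist A B 2).trans (dist_triangle A P B)
  · rintro ⟨ε, hε, ⟨P, hP, hPC, -, hPz⟩, ⟨Q, hQ, hQD, -, hQz⟩⟩
    have hε' : |ε| = 1 := by rcases hε with rfl | rfl <;> simp
    refine ⟨ε, hε, ?_⟩
    rw [lengthViaFace, ENNReal.ofReal_max]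
    refine max_le (h.ofReal_le_eVariationOn hP ?_) (h.ofReal_le_eVariationOn hQ ?_)
    · linarith [one_sub_mul_le_dist A hε' hPz, one_sub_le_dist_of_mem_face hB hPC, dist_comm B P]
    · linarith [one_sub_le_dist_of_mem_face hA hQD, one_sub_mul_le_dist B hε' hQz, dist_comm B Q]

lemma ofReal_min_le_geoDist (hA : A ∈ face 0 1) (hB : B ∈ face 1 1) :
    ENNReal.ofReal
        (min (lengthViaEdge A B) (min (lengthViaFace 1 A B) (lengthViaFace (-1) A B))) ≤
      geoDist A B := by
  rw [geoDist_eq_iInf]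
  refine le_iInf₂ fun γ hγ ↦ ?_
  simp only [ENNReal.ofReal_min, min_le_iff]
  simpa using hγ.lengthViaEdge_le_or_lengthViaFace_le hA hB

lemma exists_mul_add_eq {a b : ℝ} (ha : 0 ≤ a) (hb : 0 ≤ b) :
    ∃ t ∈ Icc (0 : ℝ) 1, t * (a + b) = a :=
  ⟨a / (a + b), ⟨by positivity, div_le_one_of_le₀ (by linarith) (by positivity)⟩,
    div_mul_cancel_of_imp fun h ↦ by linarith⟩

lemma dist_fin_three_le_iff {P Q : Fin 3 → ℝ} {r : ℝ} :
    dist P Q ≤ r ↔ |P 0 - Q 0| ≤ r ∧ |P 1 - Q 1| ≤ r ∧ |P 2 - Q 2| ≤ r := by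
  simp [dist_pi_le_iff', Fin.forall_fin_succ, Real.dist_eq]

lemma mem_face_fin_three_iff {i : Fin 3} {P : Fin 3 → ℝ} :
    P ∈ face i ε ↔ (|P 0| ≤ 1 ∧ |P 1| ≤ 1 ∧ |P 2| ≤ 1) ∧ P i = ε := by
  simp [mem_face_iff, Fin.forall_fin_succ]

lemma exists_mem_edge_dist_add_dist_le (hA : A ∈ face 0 1) (hB : B ∈ face 1 1) :
    ∃ M ∈ face 0 1 ∩ face 1 1, dist A M + dist M B ≤ lengthViaEdge A B := by
  obtain ⟨⟨-, hA1, hA2⟩, hA0⟩ := mem_face_fin_three_iff.1 hA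
  obtain ⟨⟨hB0, -, hB2⟩, hB1⟩ := mem_face_fin_three_iff.1 hB
  have ha : 0 ≤ 1 - A 1 := sub_nonneg.2 (abs_le.1 hA1).2
  have hb : 0 ≤ 1 - B 0 := sub_nonneg.2 (abs_le.1 hB0).2
  -- The crossing point divides the path in the ratio `1 - A 1 : 1 - B 0`.
  obtain ⟨t, ht, htA⟩ := exists_mul_add_eq ha hb
  have ht' : 0 ≤ 1 - t := sub_nonneg.2 ht.2
  set L := lengthViaEdge A B
  have hxy : 1 - A 1 + (1 - B 0) ≤ L := le_max_of_le_left (by linarith)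
  have hz : dist (A 2) (B 2) ≤ L := le_max_right _ _
  have hL0 : 0 ≤ L := dist_nonneg.trans hz
  set c := AffineMap.lineMap (A 2) (B 2) t
  have hc1 : |c| ≤ 1 := abs_le.2 <|
    (convex_Icc (-1 : ℝ) 1).lineMap_mem (abs_le.1 hA2) (abs_le.1 hB2) ht
  have hAc : |A 2 - c| ≤ t * L := by
    rw [← Real.dist_eq, dist_left_lineMap, Real.norm_of_nonneg ht.1]
    exact mul_le_mul_of_nonneg_left hz ht.1
  have hcB : |c - B 2| ≤ (1 - t) * L := by
    rw [← Real.dist_eq, dist_lineMap_right, Real.norm_of_nonneg ht']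
    exact mul_le_mul_of_nonneg_left hz ht'
  have hAM : dist A ![1, 1, c] ≤ t * L := by
    refine dist_fin_three_le_iff.2 ⟨?_, ?_, hAc⟩
    · simpa [hA0] using mul_nonneg ht.1 hL0
    · calc |A 1 - 1| = t * (1 - A 1 + (1 - B 0)) := by rw [abs_sub_comm, abs_of_nonneg ha, htA]
        _ ≤ t * L := mul_le_mul_of_nonneg_left hxy ht.1
  have hMB : dist ![1, 1, c] B ≤ (1 - t) * L := by
    refine dist_fin_three_le_iff.2 ⟨?_, ?_, hcB⟩
    · calc |1 - B 0| = (1 - t) * (1 - A 1 + (1 - B 0)) := by rw [abs_of_nonneg hb]; linarith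
        _ ≤ (1 - t) * L := mul_le_mul_of_nonneg_left hxy ht'
    · simpa [hB1] using mul_nonneg ht' hL0
  refine ⟨![1, 1, c], ?_, by linarith⟩
  simp [mem_face_fin_three_iff, hc1]

lemma geoDist_le_lengthViaEdge (hA : A ∈ face 0 1) (hB : B ∈ face 1 1) :
    geoDist A B ≤ ENNReal.ofReal (lengthViaEdge A B) := by
  obtain ⟨M, ⟨hM0, hM1⟩, hM⟩ := exists_mem_edge_dist_add_dist_le hA hB
  calc geoDist A B ≤ geoDist A M + geoDist M B := geoDist_triangle A M B
    _ ≤ edist A M + edist M B := add_le_add (geoDist_le_edist_of_mem_face abs_one hA hM0)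
        (geoDist_le_edist_of_mem_face abs_one hM1 hB)
    _ = ENNReal.ofReal (dist A M + dist M B) := by
        rw [ENNReal.ofReal_add dist_nonneg dist_nonneg, edist_dist, edist_dist]
    _ ≤ ENNReal.ofReal (lengthViaEdge A B) := ENNReal.ofReal_le_ofReal hM

lemma exists_mem_edges_dist_add_dist_add_dist_le (hε : |ε| = 1) (hA : A ∈ face 0 1)
    (hB : B ∈ face 1 1) :
    ∃ P ∈ face 0 1 ∩ face 2 ε, ∃ Q ∈ face 1 1 ∩ face 2 ε,
      dist A P + dist P Q + dist Q B ≤ max (2 - ε * A 2 - ε * B 2) (lengthViaFace ε A B) := by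
  obtain ⟨P, hP, hAP, hP1⟩ := exists_mem_face_inter_face_dist_le (j := 1) (k := 2) hε hA
    (by decide) (by decide) (by decide)
  obtain ⟨Q, hQ, hBQ, hQ0⟩ := exists_mem_face_inter_face_dist_le (j := 0) (k := 2) hε hB
    (by decide) (by decide) (by decide)
  refine ⟨P, hP, Q, hQ, ?_⟩
  rw [dist_comm] at hBQ
  have hPQ : dist P Q ≤ max (1 - P 1) (1 - Q 0) := by
    obtain ⟨⟨-, hP1, -⟩, hP0⟩ := mem_face_fin_three_iff.1 hP.1
    obtain ⟨⟨hQ0, -, -⟩, hQ1⟩ := mem_face_fin_three_iff.1 hQ.1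
    refine dist_fin_three_le_iff.2 ⟨?_, ?_, ?_⟩
    · rw [hP0, abs_of_nonneg (sub_nonneg.2 (abs_le.1 hQ0).2)]
      exact le_max_right _ _
    · rw [hQ1, abs_sub_comm, abs_of_nonneg (sub_nonneg.2 (abs_le.1 hP1).2)]
      exact le_max_left _ _
    · rw [hP.2.2, hQ.2.2, sub_self, abs_zero]
      exact le_max_of_le_left (sub_nonneg.2 (abs_le.1 hP1).2)
  calc dist A P + dist P Q + dist Q B
      ≤ 1 - ε * A 2 + max (max 0 (ε * A 2 - A 1)) (max 0 (ε * B 2 - B 0)) + (1 - ε * B 2) :=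
        add_le_add (add_le_add hAP (hPQ.trans (max_le_max hP1 hQ0))) hBQ
    _ ≤ max (2 - ε * A 2 - ε * B 2) (lengthViaFace ε A B) := by
        grind [lengthViaFace]

lemma lengthViaEdge_le_lengthViaFace (hε : |ε| = 1) (hA : A 1 ≤ 1) (hB : B 0 ≤ 1)
    (h : lengthViaFace ε A B ≤ 2 - ε * A 2 - ε * B 2) :
    lengthViaEdge A B ≤ lengthViaFace ε A B := by
  obtain ⟨hBz, hAz⟩ := max_le_iff.1 h
  have hx : 2 - ε * A 2 - B 0 ≤ lengthViaFace ε A B := le_max_left _ _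
  have hy : 2 - A 1 - ε * B 2 ≤ lengthViaFace ε A B := le_max_right _ _
  have hz : |A 2 - B 2| = |ε * A 2 - ε * B 2| := by rw [← mul_sub, abs_mul, hε, one_mul]
  exact max_le (by linarith) (hz.trans_le (abs_le.2 ⟨by linarith, by linarith⟩))

lemma geoDist_le_lengthViaFace (hε : |ε| = 1) (hA : A ∈ face 0 1) (hB : B ∈ face 1 1) :
    geoDist A B ≤ ENNReal.ofReal (lengthViaFace ε A B) := by
  rcases le_total (lengthViaFace ε A B) (2 - ε * A 2 - ε * B 2) with h | h
  · exact (geoDist_le_lengthViaEdge hA hB).trans <| ENNReal.ofReal_le_ofReal <|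
      lengthViaEdge_le_lengthViaFace hε (abs_le.1 ((mem_face_iff.1 hA).1 1)).2
        (abs_le.1 ((mem_face_iff.1 hB).1 0)).2 h
  obtain ⟨P, ⟨hPx, hPz⟩, Q, ⟨hQy, hQz⟩, hPQ⟩ :=
    exists_mem_edges_dist_add_dist_add_dist_le hε hA hB
  rw [max_eq_right h] at hPQ
  calc geoDist A B ≤ geoDist A Q + geoDist Q B := geoDist_triangle A Q B
    _ ≤ geoDist A P + geoDist P Q + geoDist Q B := by
        gcongr
        exact geoDist_triangle A P Q
    _ ≤ edist A P + edist P Q + edist Q B :=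
        add_le_add (add_le_add (geoDist_le_edist_of_mem_face abs_one hA hPx)
          (geoDist_le_edist_of_mem_face hε hPz hQz)) (geoDist_le_edist_of_mem_face abs_one hQy hB)
    _ = ENNReal.ofReal (dist A P + dist P Q + dist Q B) := by
        rw [ENNReal.ofReal_add (by positivity) dist_nonneg,
          ENNReal.ofReal_add dist_nonneg dist_nonneg, edist_dist, edist_dist, edist_dist]
    _ ≤ ENNReal.ofReal (lengthViaFace ε A B) := ENNReal.ofReal_le_ofReal hPQ

lemma geoDist_eq_ofReal_min (hA : A ∈ face 0 1) (hB : B ∈ face 1 1) :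
    geoDist A B = ENNReal.ofReal
      (min (lengthViaEdge A B) (min (lengthViaFace 1 A B) (lengthViaFace (-1) A B))) := by
  refine le_antisymm ?_ (ofReal_min_le_geoDist hA hB)
  rw [ENNReal.ofReal_min, ENNReal.ofReal_min]
  exact le_min (geoDist_le_lengthViaEdge hA hB)
    (le_min (geoDist_le_lengthViaFace abs_one hA hB)
      (geoDist_le_lengthViaFace (by simp) hA hB))

end Cube

theorem statement0 (ay az bx bz : ℝ)
    (hay : ay ∈ Icc (-1:ℝ) 1) (haz : az ∈ Icc (-1:ℝ) 1)
    (hbx : bx ∈ Icc (-1:ℝ) 1) (hbz : bz ∈ Icc (-1:ℝ) 1) :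
    geoDist ![1, ay, az] ![bx, 1, bz] =
      ENNReal.ofReal
        (min (max (2 - ay - bx) |az - bz|)
          (min (max (2 - az - bx) (2 - ay - bz))
            (max (2 + az - bx) (2 - ay + bz)))) := by
  have hA : ![1, ay, az] ∈ face 0 1 :=
    mem_face_fin_three_iff.2 ⟨⟨abs_one.le, abs_le.2 hay, abs_le.2 haz⟩, rfl⟩
  have hB : ![bx, 1, bz] ∈ face 1 1 :=
    mem_face_fin_three_iff.2 ⟨⟨abs_le.2 hbx, abs_one.le, abs_le.2 hbz⟩, rfl⟩
  simpa [lengthViaEdge, lengthViaFace] using geoDist_eq_ofReal_min hA hB
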